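/- Let γ ⊆ {1,…,s} and let δ = {δ_k ≥ 2 : k ∈ γ} and b = {b_k ≥ 0 : k ∈ γ} be lists of integers. For each k ∈ γ, let J_k = {\overline{b_k}, \overline{b_k+1}, …, \overline{b_k+δ_k−2}} be the corresponding list of consecutive integers modulo r_k, and set A_k = {i ∈ I : i(k) ∈ J_k}. If C is a nonzero abelian code in A_q(r_1,…,r_s) satisfying ∪_{k∈γ} A_k ⊆ D_α(C) for some α ∈ U, then d*(C) ≥ ∏_{k∈γ} δ_k. -/

import Mathlib

open Classical

noncomputable section

namespace AbelianCodes

/-- The index set `I = Z_{r 0} × ⋯ × Z_{r (s-1)}`. -/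
abbrev Idx {s : ℕ} (r : Fin s → ℕ) : Type := ∀ k, ZMod (r k)

variable {F : Type*} [Field F]

/-- The support of a hypermatrix. -/
def hsupp {s : ℕ} {r : Fin s → ℕ} (M : Idx r → F) : Set (Idx r) := {i | M i ≠ 0}

/-- The hypercolumn `H_M(k,b)` of a hypermatrix, viewed as an `(s-1)`-dimensional
hypermatrix indexed by `∏_{j ≠ k} Z_{r j}`. -/
def hypercol {s : ℕ} {r : Fin (s+1) → ℕ} (M : Idx r → F) (k : Fin (s+1)) (b : ZMod (r k)) :
    Idx (fun j => r (k.succAbove j)) → F :=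
  fun i => M (k.insertNth b i)

/-- `ω_M(k,b)`: the number of consecutive zero hypercolumns
`H_M(k,b+1), H_M(k,b+2), …` (indices modulo `r k`). -/
def runLen {s : ℕ} {r : Fin (s+1) → ℕ} (M : Idx r → F) (k : Fin (s+1)) (b : ZMod (r k)) : ℕ :=
  ((Finset.Ico 1 (r k)).filter
    (fun j => ∀ m : ℕ, m ∈ Finset.Icc 1 j → hypercol M k (b + (m : ZMod (r k))) = 0)).card

/-- The apparent distance `d*(M)` of a hypermatrix, defined recursively on the
number of variables.  (A `0`-dimensional hypermatrix is a scalar, of apparent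
distance `1` if nonzero and `0` otherwise; with this convention the `1`-dimensional
case becomes `max {ω_M(b)+1 : a_b ≠ 0}` and the higher-dimensional case becomes
`max_k max {(ω_M(k,b)+1)·d*(H_M(k,b)) : H_M(k,b) ≠ 0}`, since zero hypermatrices
have apparent distance `0`.) -/
def apd : {s : ℕ} → (r : Fin s → ℕ) → (Idx r → F) → ℕ
  | 0, _, M => if M finZeroElim = 0 then 0 else 1
  | _+1, r, M =>
      Finset.univ.sup fun k =>
        Finset.univ.sup fun b : Fin (r k) =>
          (runLen M k ((b : ℕ) : ZMod (r k)) + 1) *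
            apd (fun j => r (k.succAbove j)) (hypercol M k ((b : ℕ) : ZMod (r k)))

/-- The `q^t`-orbit `Q_t(a)` of `a ∈ I`. -/
def qOrbit {s : ℕ} (r : Fin s → ℕ) (q t : ℕ) (a : Idx r) : Set (Idx r) :=
  {i | ∃ n : ℕ, ∀ k, i k = (q : ZMod (r k)) ^ (t * n) * a k}

/-- `D` is a union of `q^t`-orbits. -/
def OrbitUnion {s : ℕ} (r : Fin s → ℕ) (q t : ℕ) (D : Set (Idx r)) : Prop :=
  ∀ a ∈ D, qOrbit r q t a ⊆ D

/-- The hypermatrix afforded by `D ⊆ I`: entry `0` at indices in `D`, entry `1` elsewhere. -/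
def afforded {s : ℕ} (r : Fin s → ℕ) (D : Set (Idx r)) : Idx r → F :=
  fun i => if i ∈ D then 0 else 1

/-- `M` is a `q^t`-orbits hypermatrix, i.e. the hypermatrix afforded by some union
of `q^t`-orbits. -/
def IsOrbitMx {s : ℕ} (r : Fin s → ℕ) (q t : ℕ) (M : Idx r → F) : Prop :=
  ∃ D : Set (Idx r), OrbitUnion r q t D ∧ M = afforded r D

/-- The minimum apparent distance `mad(M) = min {d*(P) : P a q^t-orbits hypermatrix,
`0 ≠ P ≤ M`}`, where `P ≤ M` means `supp P ⊆ supp M`. -/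
def mad {s : ℕ} (r : Fin s → ℕ) (q t : ℕ) (M : Idx r → F) : ℕ :=
  sInf {d | ∃ P : Idx r → F, IsOrbitMx r q t P ∧ P ≠ 0 ∧ hsupp P ⊆ hsupp M ∧ apd r P = d}

/-- The `q^t`-cyclotomic coset of `b` modulo `r`. -/
def cycCoset (r q t : ℕ) (b : ZMod r) : Set (ZMod r) :=
  {x | ∃ n : ℕ, x = (q : ZMod r) ^ (t * n) * b}



variable {F : Type*} [Field F] {L : Type*} [Field L] [Algebra F L]

/-- An abelian code: a subspace of the group algebra `F[∏ Z_{r k}]` (identified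
with the space of coefficient functions `I → F`) which is closed under all
translations, i.e. an ideal. -/
def IsAbelianCode {s : ℕ} {r : Fin s → ℕ} (C : Submodule F (Idx r → F)) : Prop :=
  ∀ f ∈ C, ∀ a : Idx r, (fun i => f (i - a)) ∈ C

/-- Convolution: the multiplication of the group algebra in the coefficient
function picture. -/
def conv {s : ℕ} {r : Fin s → ℕ} [∀ k, NeZero (r k)] (f g : Idx r → F) : Idx r → F :=
  fun i => ∑ u : Idx r, f u * g (i - u)

/-- The (discrete) Fourier transform `φ_{α,f}(j) = f(α^j)` of a coefficient
function `f : I → F` with respect to `α`, with values in the extension `L`. -/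
def fourier {s : ℕ} {r : Fin s → ℕ} [∀ k, NeZero (r k)] (α : Fin s → L) (f : Idx r → F) :
    Idx r → L :=
  fun j => ∑ i : Idx r, algebraMap F L (f i) * ∏ k, α k ^ ((i k).val * (j k).val)

/-- The Hamming weight of a codeword. -/
def wt {s : ℕ} {r : Fin s → ℕ} [∀ k, NeZero (r k)] (f : Idx r → F) : ℕ :=
  (Finset.univ.filter fun i : Idx r => f i ≠ 0).card

/-- The minimum distance of a code. -/
def dmin {s : ℕ} {r : Fin s → ℕ} [∀ k, NeZero (r k)] (C : Submodule F (Idx r → F)) : ℕ :=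
  sInf {w | ∃ f ∈ C, f ≠ (0 : Idx r → F) ∧ wt f = w}

/-- The defining set `D_α(C) = {a ∈ I : f(α^a) = 0 for all f ∈ C}`. -/
def defSet {s : ℕ} (r : Fin s → ℕ) [∀ k, NeZero (r k)] (α : Fin s → L)
    (C : Submodule F (Idx r → F)) : Set (Idx r) :=
  {a | ∀ f ∈ C, fourier α f a = 0}

/-- The apparent distance of a code `C` with respect to `α`:
`d_α*(C) = min {d*(M(φ_{α,e})) : 0 ≠ e = e² ∈ C}`. -/
def dStarAlpha {s : ℕ} (r : Fin s → ℕ) [∀ k, NeZero (r k)] (α : Fin s → L)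
    (C : Submodule F (Idx r → F)) : ℕ :=
  sInf {d | ∃ e, e ∈ C ∧ e ≠ (0 : Idx r → F) ∧ conv e e = e ∧ apd r (fourier α e) = d}

/-- The apparent distance of a code: `d*(C) = max {d_β*(C) : β ∈ U}`, where `U`
is the set of tuples of primitive roots of unity in `L`. -/
def dStarCode {s : ℕ} (r : Fin s → ℕ) [∀ k, NeZero (r k)] (L : Type*) [Field L] [Algebra F L]
    (C : Submodule F (Idx r → F)) : ℕ :=
  sSup {d | ∃ α : Fin s → L, (∀ k, IsPrimitiveRoot (α k) (r k)) ∧ dStarAlpha r α C = d}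

/-- The defining set of the multivariate BCH code `B_q(α,γ,δ,b)`:
`∪_{k∈γ} ∪_{l=0}^{δ_k−2} ∪_{i ∈ I(k, b_k+l)} Q(i)`. -/
def bchDefSet {s : ℕ} (r : Fin s → ℕ) (q : ℕ) (γ : Finset (Fin s)) (δ b : Fin s → ℕ) :
    Set (Idx r) :=
  ⋃ k ∈ γ, ⋃ l ∈ Finset.range (δ k - 1),
    ⋃ i ∈ {i : Idx r | i k = ((b k + l : ℕ) : ZMod (r k))}, qOrbit r q 1 i


section helpers

variable {F : Type*} [Field F] {L : Type*} [Field L] [Algebra F L]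

lemma apd_lower : ∀ {s : ℕ} (r : Fin s → ℕ) [∀ k, NeZero (r k)] (M : Idx r → L) (_ : M ≠ 0)
    (δ b : Fin s → ℕ) (_ : ∀ k, 1 ≤ δ k)
    (_ : ∀ k, ∀ i : Idx r, ∀ l : ℕ, l + 1 < δ k → i k = ((b k + l : ℕ) : ZMod (r k)) → M i = 0),
    ∏ k, δ k ≤ apd r M := by
  intro s
  induction s with
  | zero =>
    intro r _ M hM δ b _ _
    have : M finZeroElim ≠ 0 := by
      intro h
      apply hM
      funext i
      rw [Subsingleton.elim i finZeroElim, h]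
      rfl
    simp [apd, this]
  | succ s ih =>
    intro r _ M hM δ b hδ hz
    have hcol0 : ∀ l : ℕ, l + 1 < δ 0 → hypercol M 0 ((b 0 + l : ℕ) : ZMod (r 0)) = 0 := by
      intro l hl
      funext i
      exact hz 0 _ l hl (by simp)
    obtain ⟨i₀, hi₀⟩ := Function.ne_iff.mp hM
    have hne : hypercol M 0 (i₀ 0) ≠ 0 := by
      intro h
      have := congrFun h (fun j => i₀ (Fin.succAbove 0 j))
      apply hi₀
      have h2 : M (Fin.insertNth 0 (i₀ 0) (Fin.removeNth 0 i₀)) = 0 := this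
      rw [Fin.insertNth_self_removeNth] at h2
      exact h2
    have hlt : δ 0 - 1 < r 0 := by
      by_contra hge
      apply hne
      have hv : (i₀ 0 - (b 0 : ZMod (r 0))).val < r 0 := ZMod.val_lt _
      have := hcol0 (i₀ 0 - (b 0 : ZMod (r 0))).val (by omega)
      rw [Nat.cast_add, ZMod.natCast_zmod_val] at this
      simpa using this
    have hex : ∃ t : ℕ, 1 ≤ t ∧ hypercol M 0 ((b 0 : ZMod (r 0)) - (t : ZMod (r 0))) ≠ 0 := by
      refine ⟨((b 0 : ZMod (r 0)) - i₀ 0).val + r 0, ?_, ?_⟩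
      · have := NeZero.pos (r 0); omega
      · rw [Nat.cast_add, ZMod.natCast_zmod_val]
        simpa using hne
    set t := Nat.find hex with ht
    obtain ⟨ht1, htne⟩ := Nat.find_spec hex
    rw [← ht] at ht1 htne
    set c : ZMod (r 0) := (b 0 : ZMod (r 0)) - (t : ZMod (r 0)) with hc
    have hrun : δ 0 - 1 ≤ runLen M 0 c := by
      unfold runLen
      calc δ 0 - 1 = (Finset.Icc 1 (δ 0 - 1)).card := by simp
        _ ≤ _ := by
          apply Finset.card_le_card
          intro j hj
          rw [Finset.mem_Icc] at hj
          refine (@Finset.mem_filter _ _ (_) _ _).mpr ⟨Finset.mem_Ico.mpr (by omega), ?_⟩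
          intro m hm
          rw [Finset.mem_Icc] at hm
          by_cases hmt : m < t
          · have h := Nat.find_min hex (m := t - m) (by omega)
            have h2 : hypercol M 0 ((b 0 : ZMod (r 0)) - ((t - m : ℕ) : ZMod (r 0))) = 0 := by
              by_contra h3
              exact h ⟨by omega, h3⟩
            rw [← h2]
            congr 1
            rw [Nat.cast_sub hmt.le, hc]
            ring
          · have h2 := hcol0 (m - t) (by omega)
            rw [← h2]
            congr 1
            rw [Nat.cast_add, Nat.cast_sub (by omega), hc]
            ring
    have hrec := ih (fun j => r (Fin.succAbove 0 j)) (hypercol M 0 c) htne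
      (fun j => δ (Fin.succAbove 0 j)) (fun j => b (Fin.succAbove 0 j)) (fun j => hδ _)
      (by
        intro k i l hl hi
        exact hz (Fin.succAbove 0 k) _ l hl (by rw [Fin.insertNth_apply_succAbove]; exact hi))
    rw [Fin.prod_univ_succAbove _ 0]
    have h1 : (runLen M 0 c + 1) * apd (fun j => r (Fin.succAbove 0 j)) (hypercol M 0 c)
        ≤ apd r M := by
      rw [apd]
      refine le_trans ?_ (Finset.le_sup (Finset.mem_univ (0 : Fin (s+1))))
      refine le_trans ?_ (Finset.le_sup (Finset.mem_univ (⟨c.val, ZMod.val_lt c⟩ : Fin (r 0))))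
      simp only [ZMod.natCast_zmod_val]
      exact le_rfl
    refine le_trans (Nat.mul_le_mul ?_ hrec) h1
    have := hδ 0
    omega

def ch {s : ℕ} {r : Fin s → ℕ} (α : Fin s → L) (i j : Idx r) : L :=
  ∏ k, α k ^ ((i k).val * (j k).val)

lemma ch_comm {s : ℕ} {r : Fin s → ℕ} (α : Fin s → L) (i j : Idx r) : ch α i j = ch α j i := by
  simp [ch, mul_comm]

lemma ch_add {s : ℕ} {r : Fin s → ℕ} [∀ k, NeZero (r k)] (α : Fin s → L)
    (hα : ∀ k, IsPrimitiveRoot (α k) (r k)) (i j j' : Idx r) :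
    ch α i (j + j') = ch α i j * ch α i j' := by
  unfold ch
  rw [← Finset.prod_mul_distrib]
  refine Finset.prod_congr rfl fun k _ => ?_
  have h1 : (α k ^ (i k).val) ^ r k = 1 := by
    rw [← pow_mul, mul_comm, pow_mul, (hα k).pow_eq_one, one_pow]
  rw [Pi.add_apply, ZMod.val_add, pow_mul, ← pow_eq_pow_mod _ h1, pow_add, ← pow_mul, ← pow_mul]

def chHom {s : ℕ} {r : Fin s → ℕ} [∀ k, NeZero (r k)] (α : Fin s → L)
    (hα : ∀ k, IsPrimitiveRoot (α k) (r k)) (i : Idx r) : Multiplicative (Idx r) →* L where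
  toFun j := ch α i j.toAdd
  map_one' := by simp [ch]
  map_mul' x y := by rw [toAdd_mul, ch_add α hα]

lemma chHom_inj {s : ℕ} {r : Fin s → ℕ} [∀ k, NeZero (r k)] (α : Fin s → L)
    (hα : ∀ k, IsPrimitiveRoot (α k) (r k)) : Function.Injective (chHom (r := r) α hα) := by
  intro i i' h
  funext k
  have key : ∀ i : Idx r, chHom α hα i (Multiplicative.ofAdd (Pi.single k 1)) =
      α k ^ (i k).val := by
    intro i
    show ch α i (Pi.single k 1) = _
    unfold ch
    rw [Finset.prod_eq_single k]
    · have h1 : (α k ^ (i k).val) ^ r k = 1 := by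
        rw [← pow_mul, mul_comm, pow_mul, (hα k).pow_eq_one, one_pow]
      rw [Pi.single_eq_same, pow_mul, ZMod.val_one_eq_one_mod, ← pow_eq_pow_mod _ h1, pow_one]
    · intro m _ hm
      rw [Pi.single_eq_of_ne hm]
      simp
    · simp
  have h2 := DFunLike.congr_fun h (Multiplicative.ofAdd (Pi.single k 1))
  rw [key, key] at h2
  exact ZMod.val_injective _ ((hα k).pow_inj (ZMod.val_lt _) (ZMod.val_lt _) h2)

lemma fourier_inj {s : ℕ} {r : Fin s → ℕ} [∀ k, NeZero (r k)] (α : Fin s → L)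
    (hα : ∀ k, IsPrimitiveRoot (α k) (r k)) (f g : Idx r → F)
    (h : fourier α f = fourier α g) : f = g := by
  have hli := (linearIndependent_monoidHom (Multiplicative (Idx r)) L).comp _ (chHom_inj (r := r) α hα)
  rw [Fintype.linearIndependent_iff] at hli
  funext i
  have := hli (fun i => algebraMap F L (f i) - algebraMap F L (g i)) (by
    funext j
    have hj := congrFun h j.toAdd
    rw [Finset.sum_apply]
    simp only [fourier] at hj
    simp only [Pi.smul_apply, Function.comp, smul_eq_mul, sub_mul, Finset.sum_sub_distrib]
    exact sub_eq_zero.mpr hj) i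
  exact (algebraMap F L).injective (sub_eq_zero.mp this)

lemma fourier_conv {s : ℕ} {r : Fin s → ℕ} [∀ k, NeZero (r k)] (α : Fin s → L)
    (hα : ∀ k, IsPrimitiveRoot (α k) (r k)) (f g : Idx r → F) :
    fourier α (conv f g) = fourier α f * fourier α g := by
  funext j
  show ∑ i : Idx r, algebraMap F L (∑ u : Idx r, f u * g (i - u)) * ch α i j =
    (∑ u : Idx r, algebraMap F L (f u) * ch α u j) * (∑ i : Idx r, algebraMap F L (g i) * ch α i j)
  simp only [map_sum, Finset.sum_mul]
  rw [Finset.sum_comm]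
  refine Finset.sum_congr rfl fun u _ => ?_
  rw [Finset.mul_sum, ← Equiv.sum_comp (Equiv.addRight u)]
  refine Finset.sum_congr rfl fun i _ => ?_
  simp only [Equiv.coe_addRight, add_sub_cancel_right, map_mul]
  rw [ch_comm α (i + u), ch_add α hα, ch_comm α j, ch_comm α j]
  ring

lemma conv_mem {s : ℕ} {r : Fin s → ℕ} [∀ k, NeZero (r k)]
    (C : Submodule F (Idx r → F)) (hC : IsAbelianCode C) (f g : Idx r → F) (hg : g ∈ C) :
    conv f g ∈ C := by
  have : conv f g = ∑ u : Idx r, f u • (fun i => g (i - u)) := by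
    funext i
    simp [conv, Finset.sum_apply]
  rw [this]
  exact Submodule.sum_mem _ fun u _ => Submodule.smul_mem _ _ (hC g hg u)

def cpow {s : ℕ} {r : Fin s → ℕ} [∀ k, NeZero (r k)] (f : Idx r → F) : ℕ → (Idx r → F)
  | 0 => f
  | n+1 => conv f (cpow f n)

lemma fourier_zero {s : ℕ} {r : Fin s → ℕ} [∀ k, NeZero (r k)] (α : Fin s → L) :
    fourier α (0 : Idx r → F) = 0 := by
  funext j
  simp [fourier]

lemma exists_idem {s : ℕ} {r : Fin s → ℕ} [∀ k, NeZero (r k)] [Finite F] (α : Fin s → L)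
    (hα : ∀ k, IsPrimitiveRoot (α k) (r k))
    (C : Submodule F (Idx r → F)) (hC : IsAbelianCode C) (hC0 : C ≠ ⊥) :
    ∃ e, e ∈ C ∧ e ≠ (0 : Idx r → F) ∧ conv e e = e := by
  obtain ⟨f, hf, hf0⟩ := Submodule.exists_mem_ne_zero_of_ne_bot hC0
  have hmem : ∀ n, cpow f n ∈ C := by
    intro n
    induction n with
    | zero => exact hf
    | succ n ih => exact conv_mem C hC _ _ ih
  have hfou : ∀ n, fourier α (cpow f n) = fourier α f ^ (n + 1) := by
    intro n
    induction n with
    | zero => simp [cpow]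
    | succ n ih => rw [cpow, fourier_conv α hα, ih, ← pow_succ']
  obtain ⟨m, n, hmn, heq⟩ := Finite.exists_ne_map_eq_of_infinite (cpow f)
  wlog hlt : m < n generalizing m n
  · exact this n m hmn.symm heq.symm (by omega)
  have hz : ∀ j, fourier α f j = 0 ∨ fourier α f j ^ (n - m) = 1 := by
    intro j
    have h := congrArg (fun g => fourier α g j) heq
    simp only [hfou, Pi.pow_apply] at h
    by_cases h0 : fourier α f j = 0
    · exact Or.inl h0
    · right
      have h1 : n + 1 = (m + 1) + (n - m) := by omega
      rw [h1, pow_add _ (m + 1) (n - m)] at h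
      exact mul_left_cancel₀ (pow_ne_zero (m+1) h0) (by rw [mul_one]; exact h.symm)
  have h3 : n - m - 1 + 1 = n - m := by omega
  refine ⟨cpow f (n - m - 1), hmem _, ?_, ?_⟩
  · intro h
    apply hf0
    apply fourier_inj α hα
    have h2 := hfou (n - m - 1)
    rw [h, fourier_zero] at h2
    rw [fourier_zero]
    exact pow_eq_zero_iff (by omega) |>.mp h2.symm
  · apply fourier_inj α hα
    rw [fourier_conv α hα, hfou, h3]
    funext j
    rw [Pi.mul_apply, Pi.pow_apply]
    rcases hz j with h | h
    · rw [h, zero_pow (by omega), mul_zero]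
    · rw [h, mul_one]

end helpers

/-- Let `γ ⊆ {1,…,s}`, `δ_k ≥ 2`, `b_k ≥ 0` for `k ∈ γ`, and
for each `k ∈ γ` let `J_k = {b_k, b_k+1, …, b_k+δ_k−2}` (modulo `r_k`) and
`A_k = {i ∈ I : i(k) ∈ J_k}`.  If `C` is a nonzero abelian code with
`∪_{k∈γ} A_k ⊆ D_α(C)` for some `α ∈ U`, then `d*(C) ≥ ∏_{k∈γ} δ_k`. -/
theorem multivariate_bch_bound_defSet
    {s : ℕ} (r : Fin s → ℕ) [∀ k, NeZero (r k)]
    {F : Type*} [Field F] [Fintype F]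
    (hcop : ∀ k, (Fintype.card F).Coprime (r k))
    (L : Type*) [Field L] [Algebra F L]
    (α : Fin s → L) (hα : ∀ k, IsPrimitiveRoot (α k) (r k))
    (C : Submodule F (Idx r → F)) (hC : IsAbelianCode C) (hC0 : C ≠ ⊥)
    (γ : Finset (Fin s)) (δ b : Fin s → ℕ) (hδ : ∀ k ∈ γ, 2 ≤ δ k)
    (hsub : ∀ k ∈ γ, {i : Idx r | ∃ l : ℕ, l ≤ δ k - 2 ∧
      i k = ((b k + l : ℕ) : ZMod (r k))} ⊆ defSet r α C) :
    (∏ k ∈ γ, δ k) ≤ dStarCode r L C := by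
  classical
  have hfin : {d | ∃ α : Fin s → L, (∀ k, IsPrimitiveRoot (α k) (r k)) ∧
      dStarAlpha r α C = d}.Finite := by
    have h1 : {α : Fin s → L | ∀ k, IsPrimitiveRoot (α k) (r k)}.Finite := by
      refine (Set.Finite.pi' (t := fun k => {x : L | IsPrimitiveRoot x (r k)}) fun k => ?_)
      refine (Finset.finite_toSet (Polynomial.nthRootsFinset (r k) (1 : L))).subset ?_
      intro x hx
      rw [Finset.mem_coe, Polynomial.mem_nthRootsFinset (NeZero.pos (r k))]
      exact hx.pow_eq_one
    exact h1.image (fun α => dStarAlpha r α C)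
  refine le_trans ?_ (le_csSup hfin.bddAbove ⟨α, hα, rfl⟩)
  obtain ⟨e, he, he0, hee⟩ := exists_idem α hα C hC hC0
  refine le_csInf ⟨_, e, he, he0, hee, rfl⟩ ?_
  rintro d ⟨e, he, he0, hee, rfl⟩
  have hM : fourier α e ≠ 0 := by
    intro h
    exact he0 (fourier_inj α hα _ _ (by rw [h, fourier_zero]))
  have := apd_lower r (fourier α e) hM (fun k => if k ∈ γ then δ k else 1) b
    (by
      intro k
      by_cases hk : k ∈ γ
      · have := hδ k hk
        simp only [hk, if_true]; omega
      · simp [hk])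
    (by
      intro k i l hl hi
      by_cases hk : k ∈ γ
      · simp only [hk, if_true] at hl
        exact hsub k hk ⟨l, by omega, hi⟩ e he
      · simp [hk] at hl)
  refine le_trans (le_of_eq ?_) this
  rw [Finset.prod_ite_mem]
  simp

end AbelianCodes
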